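/- arXiv:math/9605212 — 2 statements merged into one kernel-verified Lean document; each statement's English description precedes it below -/
import Mathlib

section
/- Let n ≥ 1 and let q > -1 be a real number that is not an even integer. Then for every even Schwartz function φ on ℝⁿ whose support does not contain the origin and every fixed nonzero vector ξ ∈ ℝⁿ, one has ∫_{ℝⁿ} |(x,ξ)|^q φ̂(x) dx = (2π)^{n-1} C_q ∫_ℝ |t|^{-1-q} φ(tξ) dt. -/
open MeasureTheory Metric
open scoped Real RealInnerProductSpace

noncomputable section

/-- The constant `C_q = 2^{q+1} √π Γ((q+1)/2) / Γ(-q/2)`, the constant with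
`(|z|^q)^∧(t) = C_q |t|^{-1-q}` on `ℝ`. -/
def Cq (q : ℝ) : ℝ :=
  (2 : ℝ) ^ (q + 1) * Real.sqrt π * Real.Gamma ((q + 1) / 2) / Real.Gamma (-q / 2)

/-- The (non-unitary) Fourier transform `φ̂(ξ) = ∫_{ℝⁿ} φ(x) e^{-i(x,ξ)} dx`. -/
def ftNU {n : ℕ} (φ : EuclideanSpace ℝ (Fin n) → ℂ) (ξ : EuclideanSpace ℝ (Fin n)) : ℂ :=
  ∫ x, Complex.exp (-Complex.I * (⟪x, ξ⟫ : ℂ)) * φ x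

/-!
Writing `|a|^z` as a Mellin transform of the Gaussians `exp (-π s a²)` and pairing `𝓕 φ` with the
Gaussian `exp (-π s ⟪x, ξ⟫²)` by Parseval, which exchanges `s` and `1 / s`, gives
`Γ_ℝ(-z) ∫ |⟪x, ξ⟫|^z 𝓕 φ(x) dx = Γ_ℝ(1 + z) ∫ |t|^(-1 - z) φ(tξ) dt` in the strip `-1 < re z < 0`,
where both Mellin integrals converge. Since `φ` vanishes near the origin, both integrals are
holomorphic on all of `-1 < re z`. So is `Γ_ℝ(1 + z) / Γ_ℝ(-z) = Γ_ℂ(1 + z) cos(π (1 + z) / 2)`,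
which has no poles there, and the identity theorem extends the formula to this half-plane.
-/

open Filter Set Topology
open scoped FourierTransform SchwartzMap

lemma integrable_abs_rpow_mul_inv_one_add_sq_pow {σ : ℝ} {M : ℕ} (hσ : -1 < σ)
    (hM : σ + 1 < 2 * M) :
    Integrable fun y : ℝ => |y| ^ σ * ((1 + y ^ 2) ^ M)⁻¹ := by
  have hcont : Continuous fun y : ℝ => ((1 + y ^ 2) ^ M)⁻¹ :=
    Continuous.inv₀ (by fun_prop) fun y => by positivity
  have decay : (fun y : ℝ => ((1 + y ^ 2) ^ M)⁻¹) =O[atTop] fun y => y ^ (-(2 * M : ℝ)) := by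
    refine .of_bound 1 ((eventually_gt_atTop 0).mono fun y hy => ?_)
    have hy2M : y ^ (2 * M : ℝ) = (y ^ 2) ^ M := by
      rw [Real.rpow_mul hy.le, Real.rpow_natCast, Real.rpow_ofNat]
    rw [Real.norm_of_nonneg (by positivity), Real.norm_of_nonneg (by positivity), one_mul,
      Real.rpow_neg hy.le, hy2M]
    gcongr
    linarith
  have bounded : (fun y : ℝ => ((1 + y ^ 2) ^ M)⁻¹) =O[𝓝[>] 0] fun y => y ^ (-(0 : ℝ)) := by
    simpa only [neg_zero, Real.rpow_zero] using
      (hcont.continuousAt.tendsto.isBigO_one ℝ).mono nhdsWithin_le_nhds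
  have half_line := mellin_convergent_of_isBigO_scalar (s := σ + 1)
    (hcont.locallyIntegrable.locallyIntegrableOn _) decay hM bounded (by linarith)
  have even := (integrable_fun_norm_addHaar (volume : Measure ℝ)
    (f := fun y => y ^ σ * ((1 + y ^ 2) ^ M)⁻¹)).2 (by simpa using half_line)
  simpa using even

section InnerProductSpace

variable {ι V E : Type*} [Fintype ι] [NormedAddCommGroup V] [InnerProductSpace ℝ V]
  [NormedAddCommGroup E] [NormedSpace ℝ E]

lemma abs_repr_apply_le_norm (b : OrthonormalBasis ι ℝ V) (x : V) (i : ι) :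
    |b.repr x i| ≤ ‖x‖ := by
  simpa using PiLp.norm_apply_le (b.repr x) i

lemma exists_norm_schwartz_le_inv_prod_repr (b : OrthonormalBasis ι ℝ V) (f : 𝓢(V, E)) (M : ℕ) :
    ∃ C, ∀ x, ‖f x‖ ≤ C * ∏ i, ((1 + b.repr x i ^ 2) ^ M)⁻¹ := by
  set k := 2 * M * Fintype.card ι
  obtain ⟨C, hC⟩ : ∃ C, ∀ x, (1 + ‖x‖) ^ k * ‖f x‖ ≤ C :=
    ⟨_, fun x => by simpa only [norm_iteratedFDeriv_zero] using
      SchwartzMap.one_add_le_sup_seminorm_apply (𝕜 := ℝ) (m := (k, 0)) le_rfl le_rfl f x⟩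
  refine ⟨C, fun x => ?_⟩
  have weight_le : ∏ i, (1 + b.repr x i ^ 2) ^ M ≤ (1 + ‖x‖) ^ k := by
    calc ∏ i, (1 + b.repr x i ^ 2) ^ M ≤ ∏ _i : ι, ((1 + ‖x‖) ^ 2) ^ M := by
          gcongr with i
          have := sq_le_sq.2 ((abs_repr_apply_le_norm b x i).trans (le_abs_self _))
          nlinarith [norm_nonneg x]
      _ = (1 + ‖x‖) ^ k := by simp [k, ← pow_mul]
  rw [Finset.prod_inv_distrib, ← div_eq_mul_inv,
    le_div_iff₀ (Finset.prod_pos fun i _ => by positivity), mul_comm]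
  exact le_trans (by gcongr) (hC x)

variable [FiniteDimensional ℝ V]

lemma exists_orthonormalBasis_repr_eq_inner_div_norm {ξ : V} (hξ : ξ ≠ 0) :
    ∃ (b : OrthonormalBasis (Fin (Module.finrank ℝ V)) ℝ V) (i₀ : Fin (Module.finrank ℝ V)),
      ∀ x, ⟪x, ξ⟫ = ‖ξ‖ * b.repr x i₀ := by
  have : Nontrivial V := ⟨ξ, 0, hξ⟩
  let i₀ : Fin (Module.finrank ℝ V) := ⟨0, Module.finrank_pos⟩
  obtain ⟨b, hb⟩ := Orthonormal.exists_orthonormalBasis_extension_of_card_eq (𝕜 := ℝ)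
    (by simp) (v := fun _ => ‖ξ‖⁻¹ • ξ) (s := {i₀})
    ⟨fun _ => by simp [norm_smul, hξ], fun i j hij => (hij (Subsingleton.elim i j)).elim⟩
  refine ⟨b, i₀, fun x => ?_⟩
  rw [b.repr_apply_apply, hb i₀ rfl, real_inner_smul_left, real_inner_comm,
    mul_inv_cancel_left₀ (norm_ne_zero_iff.2 hξ)]

variable [MeasurableSpace V] [BorelSpace V]

lemma integrable_prod_repr (b : OrthonormalBasis ι ℝ V) {g : ι → ℝ → ℝ}
    (hg : ∀ i, Integrable (g i)) : Integrable fun x : V => ∏ i, g i (b.repr x i) :=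
  ((PiLp.volume_preserving_ofLp ι).comp b.measurePreserving_repr).integrable_comp_of_integrable
    (Integrable.fintype_prod hg)

lemma integrable_prod_abs_repr_rpow_smul (b : OrthonormalBasis ι ℝ V) {σ : ι → ℝ}
    (hσ : ∀ i, -1 < σ i) (f : 𝓢(V, E)) :
    Integrable fun x => (∏ i, |b.repr x i| ^ σ i) • f x := by
  obtain ⟨M, hM⟩ := exists_nat_gt (∑ i, (σ i + 1))
  have hM i : σ i + 1 < 2 * M := by
    have := Finset.single_le_sum (f := fun i => σ i + 1) (fun j _ => by linarith [hσ j])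
      (Finset.mem_univ i)
    have : (0:ℝ) ≤ M := M.cast_nonneg
    linarith
  obtain ⟨C, hC⟩ := exists_norm_schwartz_le_inv_prod_repr b f M
  refine ((integrable_prod_repr b fun i =>
    integrable_abs_rpow_mul_inv_one_add_sq_pow (hσ i) (hM i)).const_mul C).mono'
    (AEStronglyMeasurable.smul ?_ f.continuous.aestronglyMeasurable) (.of_forall fun x => ?_)
  · exact Measurable.aestronglyMeasurable (by fun_prop)
  · rw [norm_smul, Real.norm_of_nonneg (by positivity), Finset.prod_mul_distrib, mul_left_comm]
    gcongr
    exact hC x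

lemma integrable_abs_inner_rpow_smul_schwartz {σ : ℝ} (hσ : -1 < σ) {ξ : V} (hξ : ξ ≠ 0)
    (f : 𝓢(V, E)) : Integrable fun x => |⟪x, ξ⟫| ^ σ • f x := by
  obtain ⟨b, i₀, hb⟩ := exists_orthonormalBasis_repr_eq_inner_div_norm hξ
  have exponents_gt i : -1 < (Pi.single i₀ σ : _ → ℝ) i := by
    rcases eq_or_ne i i₀ with rfl | hi <;> simp [*]
  convert (integrable_prod_abs_repr_rpow_smul b exponents_gt f).smul (‖ξ‖ ^ σ) using 2 with x
  rw [Pi.smul_apply, smul_smul, hb, abs_mul, abs_norm, Real.mul_rpow (norm_nonneg _) (abs_nonneg _),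
    Fintype.prod_eq_single i₀ fun i hi => by simp [hi], Pi.single_eq_same]

end InnerProductSpace
section Holomorphy

lemma log_mul_rpow_le {u r d : ℝ} (hu : 0 < u) (hd : 0 < d) :
    Real.log u * u ^ r ≤ u ^ (r + d) / d := by
  calc Real.log u * u ^ r
    _ ≤ u ^ d / d * u ^ r := by gcongr; exact Real.log_le_rpow_div hu.le hd
    _ = u ^ (r + d) / d := by rw [Real.rpow_add hu]; ring

lemma abs_log_mul_rpow_le {u r d : ℝ} (hu : 0 < u) (hd : 0 < d) :
    |Real.log u| * u ^ r ≤ (u ^ (r - d) + u ^ (r + d)) / d := by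
  have neg_log_le : -Real.log u * u ^ r ≤ u ^ (r - d) / d := by
    have := log_mul_rpow_le (r := -r) (inv_pos.2 hu) hd
    rwa [Real.log_inv, Real.inv_rpow hu.le, Real.inv_rpow hu.le, ← Real.rpow_neg hu.le,
      ← Real.rpow_neg hu.le, neg_neg, neg_add, neg_neg, ← sub_eq_add_neg] at this
  rw [add_div]
  rcases abs_choice (Real.log u) with h | h <;> rw [h]
  · exact (log_mul_rpow_le hu hd).trans (le_add_of_nonneg_left (by positivity))
  · exact neg_log_le.trans (le_add_of_nonneg_right (by positivity))

lemma rpow_le_rpow_add_rpow {u a r b : ℝ} (hu : 0 < u) (har : a ≤ r) (hrb : r ≤ b) :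
    u ^ r ≤ u ^ a + u ^ b := by
  rcases le_total 1 u with h1 | h1
  · exact (Real.rpow_le_rpow_of_exponent_le h1 hrb).trans (le_add_of_nonneg_left (by positivity))
  · exact (Real.rpow_le_rpow_of_exponent_ge hu h1 har).trans
      (le_add_of_nonneg_right (by positivity))

lemma abs_log_mul_rpow_le_of_abs_sub_le {u r σ d : ℝ} (hu : 0 < u) (hd : 0 < d)
    (hr : |r - σ| ≤ d) :
    |Real.log u| * u ^ r ≤ 2 / d * (u ^ (σ - 2 * d) + u ^ (σ + 2 * d)) := by
  obtain ⟨hσr, hrσ⟩ := abs_le.1 hr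
  calc |Real.log u| * u ^ r
    _ ≤ (u ^ (r - d) + u ^ (r + d)) / d := abs_log_mul_rpow_le hu hd
    _ ≤ ((u ^ (σ - 2 * d) + u ^ (σ + 2 * d)) + (u ^ (σ - 2 * d) + u ^ (σ + 2 * d))) / d := by
      gcongr <;> exact rpow_le_rpow_add_rpow hu (by linarith) (by linarith)
    _ = 2 / d * (u ^ (σ - 2 * d) + u ^ (σ + 2 * d)) := by ring

variable {X E : Type*} [MeasurableSpace X] {μ : Measure X} [NormedAddCommGroup E]
  [NormedSpace ℂ E]

lemma norm_cpow_mul_log_smul_le {u σ d : ℝ} {w : ℂ} (hu : 0 < u) (hd : 0 < d)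
    (hw : |w.re - σ| ≤ d) (v : E) :
    ‖((u : ℂ) ^ w * Complex.log u) • v‖
      ≤ 2 / d * (‖u ^ (σ - 2 * d) • v‖ + ‖u ^ (σ + 2 * d) • v‖) := by
  calc ‖((u : ℂ) ^ w * Complex.log u) • v‖
    _ = |Real.log u| * u ^ w.re * ‖v‖ := by
      rw [norm_smul, norm_mul, Complex.norm_cpow_eq_rpow_re_of_pos hu, ← Complex.ofReal_log hu.le,
        Complex.norm_real, Real.norm_eq_abs, mul_comm (u ^ w.re)]
    _ ≤ 2 / d * (u ^ (σ - 2 * d) + u ^ (σ + 2 * d)) * ‖v‖ := by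
      gcongr ?_ * _
      exact abs_log_mul_rpow_le_of_abs_sub_le hu hd hw
    _ = 2 / d * (‖u ^ (σ - 2 * d) • v‖ + ‖u ^ (σ + 2 * d) • v‖) := by
      rw [norm_smul, norm_smul, Real.norm_of_nonneg (by positivity),
        Real.norm_of_nonneg (by positivity)]
      ring

lemma integrable_cpow_smul_of_integrable_rpow_smul {u : X → ℝ} (hu : Measurable u)
    (hu0 : ∀ᵐ x ∂μ, 0 < u x) {f : X → E} (hf : AEStronglyMeasurable f μ) {z : ℂ}
    (hint : Integrable (fun x => u x ^ z.re • f x) μ) :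
    Integrable (fun x => (u x : ℂ) ^ z • f x) μ := by
  refine hint.norm.mono' (AEStronglyMeasurable.smul
    (Measurable.aestronglyMeasurable (by fun_prop)) hf) ?_
  filter_upwards [hu0] with x hx
  rw [norm_smul, norm_smul, Complex.norm_cpow_eq_rpow_re_of_pos hx,
    Real.norm_of_nonneg (by positivity)]

lemma differentiableAt_integral_cpow_smul {u : X → ℝ} (hu : Measurable u)
    (hu0 : ∀ᵐ x ∂μ, 0 < u x) {f : X → E} (hf : AEStronglyMeasurable f μ) {z : ℂ}
    (hint : ∀ᶠ σ in 𝓝 z.re, Integrable (fun x => u x ^ σ • f x) μ) :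
    DifferentiableAt ℂ (fun z : ℂ => ∫ x, (u x : ℂ) ^ z • f x ∂μ) z := by
  obtain ⟨ε, hε, hball⟩ := Metric.eventually_nhds_iff.1 hint
  obtain ⟨d, hd, hdε⟩ : ∃ d, 0 < d ∧ 2 * d < ε := ⟨ε / 4, by positivity, by linarith⟩
  have hint_near {σ : ℝ} (hσ : |σ - z.re| < ε) : Integrable (fun x => u x ^ σ • f x) μ :=
    hball (by rwa [Real.dist_eq])
  refine (hasDerivAt_integral_of_dominated_loc_of_deriv_le
    (F' := fun w x => ((u x : ℂ) ^ w * Complex.log (u x)) • f x)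
    (bound := fun x => 2 / d * (‖u x ^ (z.re - 2 * d) • f x‖ + ‖u x ^ (z.re + 2 * d) • f x‖))
    (Metric.closedBall_mem_nhds z hd)
    (.of_forall fun w => AEStronglyMeasurable.smul
      (Measurable.aestronglyMeasurable (by fun_prop)) hf)
    (integrable_cpow_smul_of_integrable_rpow_smul hu hu0 hf (hint_near (by simpa using hε)))
    (AEStronglyMeasurable.smul (Measurable.aestronglyMeasurable (by fun_prop)) hf)
    ?dominated ?bound_integrable ?hasDerivAt).2.differentiableAt
  case dominated =>
    filter_upwards [hu0] with x hx w hw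
    exact norm_cpow_mul_log_smul_le hx hd
      ((Complex.abs_re_le_norm (w - z)).trans (by simpa [dist_eq_norm] using hw)) (f x)
  case bound_integrable =>
    exact ((hint_near (by rw [abs_lt]; constructor <;> linarith)).norm.add
      (hint_near (by rw [abs_lt]; constructor <;> linarith)).norm).const_mul _
  case hasDerivAt =>
    filter_upwards [hu0] with x hx w _
    have hux : (u x : ℂ) ≠ 0 := by exact_mod_cast hx.ne'
    simpa using ((hasDerivAt_id w).const_cpow (Or.inl hux)).smul_const (f x)

end Holomorphy

section VanishingNearZero

variable {V E : Type*} [NormedAddCommGroup V] [NormedSpace ℝ V]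
  [NormedAddCommGroup E] [NormedSpace ℝ E]

lemma integrable_norm_rpow_smul_of_zero_notMem_tsupport [MeasurableSpace V] [BorelSpace V]
    [SecondCountableTopology V] {μ : Measure V} [μ.HasTemperateGrowth] {f : 𝓢(V, E)}
    (hf : 0 ∉ tsupport f) (σ : ℝ) : Integrable (fun x => ‖x‖ ^ σ • f x) μ := by
  obtain ⟨δ, hδ, hzero⟩ := eventually_nhds_iff_ball.1 (notMem_tsupport_iff_eventuallyEq.1 hf)
  obtain ⟨k, hk⟩ := exists_nat_ge σ
  refine ((f.integrable_pow_mul μ k).const_mul (δ ^ (σ - k))).mono'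
    (AEStronglyMeasurable.smul ?_ f.continuous.aestronglyMeasurable) (.of_forall fun x => ?_)
  · exact Measurable.aestronglyMeasurable (by fun_prop)
  · rcases lt_or_ge ‖x‖ δ with hx | hx
    · simp [hzero x (by simpa using hx)]
    · have hx0 : 0 < ‖x‖ := hδ.trans_le hx
      rw [norm_smul, Real.norm_of_nonneg (by positivity), ← mul_assoc]
      gcongr
      calc ‖x‖ ^ σ = ‖x‖ ^ (σ - k) * ‖x‖ ^ k := by
            rw [← Real.rpow_natCast, ← Real.rpow_add hx0, sub_add_cancel]
        _ ≤ δ ^ (σ - k) * ‖x‖ ^ k := by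
            gcongr ?_ * _
            exact Real.rpow_le_rpow_of_nonpos hδ hx (by linarith)

lemma exists_schwartz_eq_comp_smul (f : 𝓢(V, E)) {ξ : V} (hξ : ξ ≠ 0) :
    ∃ g : 𝓢(ℝ, E), ⇑g = fun t => f (t • ξ) := by
  have line_antilipschitz : AntilipschitzWith ‖ξ‖₊⁻¹ (ContinuousLinearMap.toSpanSingleton ℝ ξ) :=
    ContinuousLinearMap.antilipschitz_of_bound _ fun t => by
      simp [norm_smul, mul_comm |t|, hξ]
  exact ⟨SchwartzMap.compCLMOfAntilipschitz ℝ
    (ContinuousLinearMap.toSpanSingleton ℝ ξ).hasTemperateGrowth line_antilipschitz f, rfl⟩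

lemma integrable_abs_rpow_smul_comp_smul {f : 𝓢(V, E)} (hf : 0 ∉ tsupport f) {ξ : V}
    (hξ : ξ ≠ 0) (σ : ℝ) : Integrable fun t : ℝ => |t| ^ σ • f (t • ξ) := by
  obtain ⟨g, hg⟩ := exists_schwartz_eq_comp_smul f hξ
  have hg0 : 0 ∉ tsupport g := fun h => by
    have := tsupport_comp_subset_preimage f (f := fun t : ℝ => t • ξ) (by fun_prop)
      (hg ▸ h : 0 ∈ tsupport fun t : ℝ => f (t • ξ))
    simp_all
  simpa only [hg, Real.norm_eq_abs] using
    integrable_norm_rpow_smul_of_zero_notMem_tsupport (μ := volume) hg0 σ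

lemma differentiable_integral_abs_cpow_smul_comp_smul {E : Type*} [NormedAddCommGroup E]
    [NormedSpace ℂ E] {f : 𝓢(V, E)} (hf : 0 ∉ tsupport f) {ξ : V} (hξ : ξ ≠ 0) :
    Differentiable ℂ fun z : ℂ => ∫ t : ℝ, ((|t| : ℝ) : ℂ) ^ z • f (t • ξ) := fun z =>
  differentiableAt_integral_cpow_smul (by fun_prop)
    ((Measure.ae_ne volume 0).mono fun _ => abs_pos.2)
    (Continuous.aestronglyMeasurable (by fun_prop))
    (.of_forall fun σ => integrable_abs_rpow_smul_comp_smul hf hξ σ)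

end VanishingNearZero

lemma pi_mul_sq_cpow_neg_div_two (y : ℝ) (p : ℂ) :
    ((π * y ^ 2 : ℝ) : ℂ) ^ (-(p / 2)) = (π : ℂ) ^ (-(p / 2)) * ((|y| : ℝ) : ℂ) ^ (-p) := by
  have arg_abs : Complex.arg (|y| : ℝ) = 0 := Complex.arg_ofReal_of_nonneg (abs_nonneg y)
  rw [← sq_abs, Complex.ofReal_mul, Complex.mul_cpow_ofReal_nonneg Real.pi_nonneg (by positivity),
    Complex.ofReal_pow, ← Complex.cpow_ofNat_mul' (by simp [arg_abs, Real.pi_pos])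
      (by simp [arg_abs, Real.pi_nonneg])]
  ring_nf

lemma pi_mul_sq_rpow_neg_div_two (y r : ℝ) :
    (π * y ^ 2) ^ (-(r / 2)) = π ^ (-(r / 2)) * |y| ^ (-r) := by
  rw [Real.mul_rpow Real.pi_nonneg (sq_nonneg _), ← sq_abs,
    ← Real.rpow_natCast_mul (abs_nonneg _)]
  ring_nf

section Mellin

variable {X E : Type*} [MeasurableSpace X] {μ : Measure X}
  [NormedAddCommGroup E] [NormedSpace ℂ E]

lemma integrable_prod_cpow_mul_exp_neg_mul_smul {w : X → ℝ} (hw : Measurable w)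
    (hw0 : ∀ᵐ x ∂μ, 0 < w x) {f : X → E} (hf : AEStronglyMeasurable f μ) {p : ℂ} (hp : 0 < p.re)
    (hint : Integrable (fun x => w x ^ (-p.re) • f x) μ) :
    Integrable (fun y : X × ℝ => ((y.2 : ℂ) ^ (p - 1) * Complex.exp (-(w y.1 * y.2))) • f y.1)
      (μ.prod (volume.restrict (Ioi 0))) := by
  have norm_kernel (x : X) : ∀ s ∈ Ioi (0 : ℝ),
      ‖(s : ℂ) ^ (p - 1) * Complex.exp (-(w x * s))‖ = s ^ (p.re - 1) * Real.exp (-(w x * s)) := by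
    intro s hs
    rw [norm_mul, Complex.norm_cpow_eq_rpow_re_of_pos hs, Complex.norm_exp]
    simp
  have kernel_measurable : Measurable fun y : X × ℝ =>
      (y.2 : ℂ) ^ (p - 1) * Complex.exp (-(w y.1 * y.2)) := by fun_prop
  refine (integrable_prod_iff (kernel_measurable.aestronglyMeasurable.smul hf.comp_fst)).2 ⟨?_, ?_⟩
  · filter_upwards [hw0] with x hx
    have := integrableOn_rpow_mul_exp_neg_mul_rpow (s := p.re - 1) (by linarith) one_pos hx
    have kernel_integrable : IntegrableOn
        (fun s : ℝ => (s : ℂ) ^ (p - 1) * Complex.exp (-(w x * s))) (Ioi 0) := by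
      refine Integrable.mono' this (by fun_prop) ?_
      filter_upwards [ae_restrict_mem measurableSet_Ioi] with s hs
      simpa only [norm_kernel x s hs, Real.rpow_one, neg_mul] using le_rfl
    exact kernel_integrable.smul_const (f x)
  · refine (hint.norm.const_mul (Real.Gamma p.re)).congr ?_
    filter_upwards [hw0] with x hx
    simp only [Pi.smul_apply', norm_smul]
    rw [integral_mul_const, setIntegral_congr_fun measurableSet_Ioi (norm_kernel x),
      Real.integral_rpow_mul_exp_neg_mul_Ioi hp hx, Real.norm_of_nonneg (by positivity),
      one_div, Real.inv_rpow hx.le, Real.rpow_neg hx.le]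
    ring

variable [SFinite μ] [CompleteSpace E]

lemma mellin_integral_exp_neg_mul_smul {w : X → ℝ} (hw : Measurable w)
    (hw0 : ∀ᵐ x ∂μ, 0 < w x) {f : X → E} (hf : AEStronglyMeasurable f μ) {p : ℂ} (hp : 0 < p.re)
    (hint : Integrable (fun x => w x ^ (-p.re) • f x) μ) :
    mellin (fun s : ℝ => ∫ x, Complex.exp (-(w x * s)) • f x ∂μ) p
      = Complex.Gamma p • ∫ x, (w x : ℂ) ^ (-p) • f x ∂μ := by
  calc mellin (fun s : ℝ => ∫ x, Complex.exp (-(w x * s)) • f x ∂μ) p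
    _ = ∫ s in Ioi (0 : ℝ), ∫ x, ((s : ℂ) ^ (p - 1) * Complex.exp (-(w x * s))) • f x ∂μ := by
        simp only [mellin, ← integral_smul, smul_smul]
    _ = ∫ x, (∫ s in Ioi (0 : ℝ), ((s : ℂ) ^ (p - 1) * Complex.exp (-(w x * s))) • f x) ∂μ :=
        (integral_integral_swap
          (integrable_prod_cpow_mul_exp_neg_mul_smul hw hw0 hf hp hint)).symm
    _ = ∫ x, Complex.Gamma p • (w x : ℂ) ^ (-p) • f x ∂μ := by
        refine integral_congr_ae ?_
        filter_upwards [hw0] with x hx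
        rw [integral_smul_const, Complex.integral_cpow_mul_exp_neg_mul_Ioi hp hx, smul_smul,
          one_div, Complex.inv_cpow_ofReal_nonneg hx.le, Complex.cpow_neg, mul_comm]
    _ = Complex.Gamma p • ∫ x, (w x : ℂ) ^ (-p) • f x ∂μ := integral_smul _ _

lemma mellin_integral_gaussian_smul {u : X → ℝ} (hu : Measurable u)
    (hu0 : ∀ᵐ x ∂μ, u x ≠ 0) {f : X → E} (hf : AEStronglyMeasurable f μ) {p : ℂ} (hp : 0 < p.re)
    (hint : Integrable (fun x => |u x| ^ (-p.re) • f x) μ) :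
    mellin (fun s : ℝ => ∫ x, Complex.exp (-π * s * u x ^ 2) • f x ∂μ) (p / 2)
      = Complex.Gammaℝ p • ∫ x, ((|u x| : ℝ) : ℂ) ^ (-p) • f x ∂μ := by
  have hre : (p / 2).re = p.re / 2 := by simp
  have subordinated := mellin_integral_exp_neg_mul_smul (w := fun x => π * u x ^ 2) (by fun_prop)
    (hu0.mono fun x hx => by positivity) hf (p := p / 2) (by simpa using hp) (by
      simp only [hre, pi_mul_sq_rpow_neg_div_two, mul_smul]
      exact hint.smul (π ^ (-(p.re / 2))))
  simp only [pi_mul_sq_cpow_neg_div_two, mul_smul, integral_smul] at subordinated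
  rw [smul_smul, mul_comm, ← neg_div, ← Complex.Gammaℝ_def] at subordinated
  rw [← subordinated]
  have exponent_eq (s : ℝ) (x : X) : -(((π * u x ^ 2 : ℝ) : ℂ) * s) = -π * s * u x ^ 2 := by
    push_cast
    ring
  simp only [exponent_eq]

end Mellin

section FourierPairing

variable {V E : Type*} [NormedAddCommGroup V] [InnerProductSpace ℝ V] [FiniteDimensional ℝ V]
  [MeasurableSpace V] [BorelSpace V] [NormedAddCommGroup E] [NormedSpace ℂ E]

lemma ae_inner_ne_zero {ξ : V} (hξ : ξ ≠ 0) : ∀ᵐ x : V, ⟪x, ξ⟫ ≠ 0 := by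
  have := Measure.addHaar_submodule (volume : Measure V) (ℝ ∙ ξ)ᗮ (by simpa using hξ)
  filter_upwards [measure_eq_zero_iff_ae_notMem.1 this] with x hx
  simpa [Submodule.mem_orthogonal_singleton_iff_inner_left] using hx

lemma differentiableAt_integral_abs_inner_cpow_smul_schwartz (f : 𝓢(V, E)) {ξ : V} (hξ : ξ ≠ 0)
    {z : ℂ} (hz : -1 < z.re) :
    DifferentiableAt ℂ (fun z : ℂ => ∫ x, ((|⟪x, ξ⟫| : ℝ) : ℂ) ^ z • f x) z :=
  differentiableAt_integral_cpow_smul (by fun_prop)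
    ((ae_inner_ne_zero hξ).mono fun _ => abs_pos.2) f.continuous.aestronglyMeasurable
    ((eventually_gt_nhds hz).mono fun _ hσ => integrable_abs_inner_rpow_smul_schwartz hσ hξ f)

variable [CompleteSpace E]

lemma integral_fourierInv_comp_inner_smul_fourier (φ : 𝓢(V, E)) (ξ : V) {H : ℝ → ℂ}
    (hH : Integrable H) :
    ∫ x, 𝓕⁻ H ⟪x, ξ⟫ • (𝓕 φ) x = ∫ t, H t • φ (t • ξ) := by
  -- The sign turns the Fourier integral along `L` into an inverse Fourier transform.
  let L : ℝ →ₗ[ℝ] V →ₗ[ℝ] ℝ := -(innerₗ V ∘ₗ LinearMap.toSpanSingleton ℝ V ξ)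
  have L_continuous : Continuous fun y : ℝ × V => L y.1 y.2 := by
    simp only [L, LinearMap.neg_apply, LinearMap.comp_apply, innerₗ_apply_apply,
      LinearMap.toSpanSingleton_apply]
    fun_prop
  have fourierIntegral_eq_inv (x : V) :
      VectorFourier.fourierIntegral Real.fourierChar volume L H x = 𝓕⁻ H ⟪x, ξ⟫ := by
    rw [Real.fourierInv_eq]
    simp [VectorFourier.fourierIntegral, L, real_inner_comm x ξ, mul_comm]
  have fourierIntegral_flip (t : ℝ) :
      VectorFourier.fourierIntegral Real.fourierChar volume L.flip (𝓕 φ : 𝓢(V, E)) t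
        = φ (t • ξ) := by
    have inversion : 𝓕⁻ (𝓕 φ) (t • ξ) = φ (t • ξ) := by
      rw [FourierTransform.fourierInv_fourier_eq]
    rw [← inversion, SchwartzMap.fourierInv_coe, Real.fourierInv_eq]
    simp [VectorFourier.fourierIntegral, L, real_inner_comm ξ, real_inner_smul_right]
  simpa only [fourierIntegral_eq_inv, fourierIntegral_flip] using
    VectorFourier.integral_fourierIntegral_smul_eq_flip (L := L) Real.continuous_fourierChar
      L_continuous hH (SchwartzMap.integrable (μ := volume) (𝓕 φ))

lemma integral_gaussian_inner_smul_fourier (φ : 𝓢(V, E)) (ξ : V) {s : ℝ} (hs : 0 < s) :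
    ∫ x, Complex.exp (-π * s * ⟪x, ξ⟫ ^ 2) • (𝓕 φ) x
      = (s : ℂ) ^ (-(1 / 2) : ℂ) • ∫ t : ℝ, Complex.exp (-π * (s⁻¹ : ℝ) * t ^ 2) • φ (t • ξ) := by
  have hs' : 0 < ((s⁻¹ : ℝ) : ℂ).re := by simpa using hs
  have gaussian_integrable : Integrable fun t : ℝ => Complex.exp (-π * (s⁻¹ : ℝ) * t ^ 2) := by
    have := integrable_cexp_neg_mul_sq (b := (π * s⁻¹ : ℝ))
      (by rw [Complex.ofReal_re]; positivity)
    simpa using this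
  have fourierInv_gaussian (y : ℝ) :
      𝓕⁻ (fun t : ℝ => Complex.exp (-π * (s⁻¹ : ℝ) * t ^ 2)) y
        = (s : ℂ) ^ (1 / 2 : ℂ) * Complex.exp (-π * s * y ^ 2) := by
    rw [Real.fourierInv_eq_fourier_neg, fourier_gaussian_pi hs', Complex.ofReal_inv,
      Complex.inv_cpow_ofReal_nonneg hs.le]
    simp
  rw [← integral_fourierInv_comp_inner_smul_fourier φ ξ gaussian_integrable]
  simp only [fourierInv_gaussian, mul_smul, integral_smul]
  rw [smul_smul, ← Complex.cpow_add _ _ (by exact_mod_cast hs.ne'), neg_add_cancel,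
    Complex.cpow_zero, one_smul]

lemma Gammaℝ_smul_integral_abs_inner_cpow_smul_fourier {φ : 𝓢(V, E)} (hφ : 0 ∉ tsupport φ) {ξ : V}
    (hξ : ξ ≠ 0) {z : ℂ} (hz : -1 < z.re) (hz' : z.re < 0) :
    Complex.Gammaℝ (-z) • ∫ x, ((|⟪x, ξ⟫| : ℝ) : ℂ) ^ z • (𝓕 φ) x
      = Complex.Gammaℝ (1 + z) • ∫ t : ℝ, ((|t| : ℝ) : ℂ) ^ (-1 - z) • φ (t • ξ) := by
  have mellin_frequency := mellin_integral_gaussian_smul (μ := volume) (u := fun x : V => ⟪x, ξ⟫)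
    (by fun_prop) (ae_inner_ne_zero hξ) (𝓕 φ).continuous.aestronglyMeasurable (p := -z)
    (by simpa using hz')
    (by simpa using integrable_abs_inner_rpow_smul_schwartz hz hξ (𝓕 φ))
  have mellin_line := mellin_integral_gaussian_smul (μ := volume) (u := fun t : ℝ => t)
    (by fun_prop) (Measure.ae_ne volume 0) (f := fun t => φ (t • ξ))
    (Continuous.aestronglyMeasurable (by fun_prop))
    (p := 1 + z) (by simpa using by linarith)
    (integrable_abs_rpow_smul_comp_smul hφ hξ _)
  rw [neg_neg] at mellin_frequency
  rw [neg_add'] at mellin_line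
  rw [← mellin_frequency, ← mellin_line]
  calc mellin (fun s : ℝ => ∫ x, Complex.exp (-π * s * ⟪x, ξ⟫ ^ 2) • (𝓕 φ) x) (-z / 2)
    _ = mellin (fun s : ℝ => (s : ℂ) ^ (-(1 / 2) : ℂ) •
          ∫ t : ℝ, Complex.exp (-π * (s⁻¹ : ℝ) * t ^ 2) • φ (t • ξ)) (-z / 2) :=
        setIntegral_congr_fun measurableSet_Ioi fun s hs => by
          simp only [integral_gaussian_inner_smul_fourier φ ξ hs]
    _ = mellin (fun s : ℝ => ∫ t : ℝ, Complex.exp (-π * s * t ^ 2) • φ (t • ξ)) ((1 + z) / 2) := by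
        rw [mellin_cpow_smul, mellin_comp_inv
          (fun s : ℝ => ∫ t : ℝ, Complex.exp (-π * s * t ^ 2) • φ (t • ξ))]
        ring_nf

end FourierPairing

section GammaFactors

lemma complex_two_pi_ne_zero : (2 * π : ℂ) ≠ 0 := by
  exact_mod_cast Real.two_pi_pos.ne'

lemma Gammaℝ_one_add_div_Gammaℝ_neg {z : ℂ} (hz : -1 < z.re) :
    Complex.Gammaℝ (1 + z) / Complex.Gammaℝ (-z)
      = Complex.Gammaℂ (1 + z) * Complex.cos (π * (1 + z) / 2) := by
  have not_pole (n : ℕ) : 1 + z ≠ -(2 * n + 1) := fun h => by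
    have re_eq : 1 + z.re = -(2 * n + 1) := by simpa using congrArg Complex.re h
    linarith [n.cast_nonneg (α := ℝ)]
  simpa using Complex.Gammaℝ_div_Gammaℝ_one_sub not_pole

lemma differentiableAt_Gammaℂ_of_re_pos {s : ℂ} (hs : 0 < s.re) :
    DifferentiableAt ℂ Complex.Gammaℂ s := by
  have not_pole (m : ℕ) : s ≠ -m := fun h => by
    have re_eq : s.re = -m := by simpa using congrArg Complex.re h
    linarith [m.cast_nonneg (α := ℝ)]
  exact ((differentiableAt_id.neg.const_cpow (Or.inl complex_two_pi_ne_zero)).const_mul 2).mul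
    (Complex.differentiableAt_Gamma s not_pole)

lemma Cq_eq_two_pi_rpow_mul (q : ℝ) :
    Cq q = (2 * π) ^ (1 + q)
      * (π ^ (-(1 + q) / 2) * Real.Gamma ((1 + q) / 2) / (π ^ (q / 2) * Real.Gamma (-q / 2))) := by
  have sqrt_pi : √π = π ^ (1 + q) * π ^ (-(1 + q) / 2) / π ^ (q / 2) := by
    rw [Real.sqrt_eq_rpow, ← Real.rpow_add Real.pi_pos, ← Real.rpow_sub Real.pi_pos]
    ring_nf
  rw [Cq, sqrt_pi, Real.mul_rpow zero_le_two Real.pi_nonneg, add_comm q 1]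
  ring

-- At even `q ≥ 0` Lean's `Γ(-q / 2) = 0` and `x / 0 = 0` give `Cq q = 0`, the value of the cosine.
lemma ofReal_Cq {q : ℝ} (hq : -1 < q) :
    (Cq q : ℂ) = 2 * Complex.Gamma (1 + q) * Complex.cos (π * (1 + q) / 2) := by
  have Gamma_ratio : (Cq q : ℂ)
      = (2 * π : ℂ) ^ (1 + q : ℂ) * (Complex.Gammaℝ (1 + q) / Complex.Gammaℝ (-q)) := by
    rw [Cq_eq_two_pi_rpow_mul, Complex.Gammaℝ_def, Complex.Gammaℝ_def, neg_neg]
    push_cast [Complex.ofReal_cpow Real.pi_nonneg, Complex.ofReal_cpow Real.two_pi_pos.le,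
      ← Complex.Gamma_ofReal]
    rfl
  rw [Gamma_ratio, Gammaℝ_one_add_div_Gammaℝ_neg (by simpa using hq), Complex.Gammaℂ_def,
    Complex.cpow_neg]
  have := (Complex.cpow_ne_zero_iff (y := (1 + q : ℂ))).2 (Or.inl complex_two_pi_ne_zero)
  field_simp

end GammaFactors

section FunctionalEquation

variable {V E : Type*} [NormedAddCommGroup V] [InnerProductSpace ℝ V] [FiniteDimensional ℝ V]
  [MeasurableSpace V] [BorelSpace V] [NormedAddCommGroup E] [NormedSpace ℂ E] [CompleteSpace E]

lemma integral_abs_inner_cpow_smul_fourier_of_re_neg {φ : 𝓢(V, E)} (hφ : 0 ∉ tsupport φ) {ξ : V}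
    (hξ : ξ ≠ 0) {z : ℂ} (hz : -1 < z.re) (hz' : z.re < 0) :
    ∫ x, ((|⟪x, ξ⟫| : ℝ) : ℂ) ^ z • (𝓕 φ) x
      = (Complex.Gammaℂ (1 + z) * Complex.cos (π * (1 + z) / 2)) •
          ∫ t : ℝ, ((|t| : ℝ) : ℂ) ^ (-1 - z) • φ (t • ξ) := by
  have Gammaℝ_ne_zero := Complex.Gammaℝ_ne_zero_of_re_pos (s := -z) (by simpa using hz')
  rw [← Gammaℝ_one_add_div_Gammaℝ_neg hz, div_eq_inv_mul, mul_smul,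
    ← Gammaℝ_smul_integral_abs_inner_cpow_smul_fourier hφ hξ hz hz', inv_smul_smul₀ Gammaℝ_ne_zero]

lemma integral_abs_inner_cpow_smul_fourier {φ : 𝓢(V, E)} (hφ : 0 ∉ tsupport φ) {ξ : V}
    (hξ : ξ ≠ 0) {z : ℂ} (hz : -1 < z.re) :
    ∫ x, ((|⟪x, ξ⟫| : ℝ) : ℂ) ^ z • (𝓕 φ) x
      = (Complex.Gammaℂ (1 + z) * Complex.cos (π * (1 + z) / 2)) •
          ∫ t : ℝ, ((|t| : ℝ) : ℂ) ^ (-1 - z) • φ (t • ξ) := by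
  set U : Set ℂ := {w | -1 < w.re}
  have hU : IsOpen U := isOpen_lt continuous_const Complex.continuous_re
  have preconnected : IsPreconnected U := (convex_halfSpace_re_gt (-1)).isPreconnected
  have lhs_analytic : AnalyticOnNhd ℂ
      (fun w : ℂ => ∫ x, ((|⟪x, ξ⟫| : ℝ) : ℂ) ^ w • (𝓕 φ) x) U :=
    DifferentiableOn.analyticOnNhd (fun w hw =>
      (differentiableAt_integral_abs_inner_cpow_smul_schwartz (𝓕 φ) hξ hw).differentiableWithinAt)
      hU
  have rhs_analytic : AnalyticOnNhd ℂ
      (fun w : ℂ => (Complex.Gammaℂ (1 + w) * Complex.cos (π * (1 + w) / 2)) •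
        ∫ t : ℝ, ((|t| : ℝ) : ℂ) ^ (-1 - w) • φ (t • ξ)) U := by
    refine DifferentiableOn.analyticOnNhd
      (fun w hw => DifferentiableAt.differentiableWithinAt ?_) hU
    have hw' : 0 < (1 + w).re := by simpa using by linarith [show -1 < w.re from hw]
    have hGamma := (differentiableAt_Gammaℂ_of_re_pos hw').comp w (differentiableAt_id.const_add 1)
    have hint := (differentiable_integral_abs_cpow_smul_comp_smul hφ hξ (-1 - w)).comp w
      (differentiableAt_id.const_sub (-1))
    exact (hGamma.mul (by fun_prop)).smul hint
  have strip_mem : ∀ᶠ w : ℂ in 𝓝 (-1 / 2), -1 < w.re ∧ w.re < 0 :=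
    (isOpen_lt continuous_const Complex.continuous_re |>.inter
      (isOpen_lt Complex.continuous_re continuous_const)).mem_nhds (by norm_num)
  exact lhs_analytic.eqOn_of_preconnected_of_eventuallyEq rhs_analytic preconnected
    (z₀ := -1 / 2) (by norm_num [U]) (strip_mem.mono fun w ⟨hw, hw'⟩ =>
      integral_abs_inner_cpow_smul_fourier_of_re_neg hφ hξ hw hw') hz

end FunctionalEquation

section AngularFrequency

variable {V E : Type*} [NormedAddCommGroup V] [InnerProductSpace ℝ V] [FiniteDimensional ℝ V]
  [MeasurableSpace V] [BorelSpace V] [NormedAddCommGroup E] [NormedSpace ℂ E]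

/-- The Fourier transform `∫ e^{-i⟪x, ξ⟫} φ(x) dx` in the angular frequency normalisation of
`ftNU`, for vector-valued functions on a finite-dimensional inner product space. -/
def angularFourier (φ : V → E) (ξ : V) : E :=
  ∫ x, Complex.exp (-Complex.I * (⟪x, ξ⟫ : ℂ)) • φ x

lemma angularFourier_eq_fourier_inv_two_pi_smul (φ : V → E) (ξ : V) :
    angularFourier φ ξ = 𝓕 φ ((2 * π)⁻¹ • ξ) := by
  rw [Real.fourier_eq', angularFourier]
  congr! 4 with x
  rw [real_inner_smul_right]
  push_cast
  field_simp

lemma integral_abs_inner_cpow_smul_angularFourier (φ : V → E) (ξ : V) (z : ℂ) :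
    ∫ x, ((|⟪x, ξ⟫| : ℝ) : ℂ) ^ z • angularFourier φ x
      = ((2 * π) ^ Module.finrank ℝ V * (2 * π : ℂ) ^ z) •
          ∫ x, ((|⟪x, ξ⟫| : ℝ) : ℂ) ^ z • 𝓕 φ x := by
  have abs_inner_eq (x : V) : |⟪x, ξ⟫| = 2 * π * |⟪(2 * π)⁻¹ • x, ξ⟫| := by
    rw [real_inner_smul_left, abs_mul, abs_of_pos (a := (2 * π)⁻¹) (by positivity),
      mul_inv_cancel_left₀ Real.two_pi_pos.ne']
  have abs_inner_cpow (x : V) : ((|⟪x, ξ⟫| : ℝ) : ℂ) ^ z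
      = (2 * π : ℂ) ^ z * ((|⟪(2 * π)⁻¹ • x, ξ⟫| : ℝ) : ℂ) ^ z := by
    rw [abs_inner_eq x, Complex.ofReal_mul,
      Complex.mul_cpow_ofReal_nonneg Real.two_pi_pos.le (abs_nonneg _), Complex.ofReal_mul,
      Complex.ofReal_ofNat]
  calc ∫ x, ((|⟪x, ξ⟫| : ℝ) : ℂ) ^ z • angularFourier φ x
    _ = (2 * π : ℂ) ^ z • ∫ x, ((|⟪(2 * π)⁻¹ • x, ξ⟫| : ℝ) : ℂ) ^ z • 𝓕 φ ((2 * π)⁻¹ • x) := by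
      rw [← integral_smul]
      congr! 2 with x
      rw [abs_inner_cpow x, angularFourier_eq_fourier_inv_two_pi_smul, mul_smul]
    _ = (2 * π : ℂ) ^ z • (2 * π) ^ Module.finrank ℝ V •
          ∫ x, ((|⟪x, ξ⟫| : ℝ) : ℂ) ^ z • 𝓕 φ x := by
      rw [Measure.integral_comp_smul volume fun x : V => ((|⟪x, ξ⟫| : ℝ) : ℂ) ^ z • 𝓕 φ x,
        inv_pow, inv_inv, abs_of_pos (by positivity)]
    _ = _ := by
      rw [← Complex.coe_smul, smul_smul, mul_comm]
      push_cast
      rfl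

theorem statement0_general [CompleteSpace E] {z : ℂ} (hz : -1 < z.re) {φ : 𝓢(V, E)}
    (hφ : 0 ∉ tsupport φ) {ξ : V} (hξ : ξ ≠ 0) :
    ∫ x, ((|⟪x, ξ⟫| : ℝ) : ℂ) ^ z • angularFourier φ x
      = ((2 * π) ^ (Module.finrank ℝ V - 1)
          * (2 * Complex.Gamma (1 + z) * Complex.cos (π * (1 + z) / 2))) •
          ∫ t : ℝ, ((|t| : ℝ) : ℂ) ^ (-1 - z) • φ (t • ξ) := by
  have : Nontrivial V := ⟨ξ, 0, hξ⟩
  have two_pi_powers : (2 * π : ℂ) ^ Module.finrank ℝ V * (2 * π : ℂ) ^ z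
      * (2 * (2 * π : ℂ) ^ (-(1 + z))) = 2 * (2 * π) ^ (Module.finrank ℝ V - 1) := by
    rw [neg_add, Complex.cpow_add _ _ complex_two_pi_ne_zero, Complex.cpow_neg, Complex.cpow_neg,
      Complex.cpow_one, ← Nat.sub_add_cancel (Module.finrank_pos (R := ℝ) (M := V)), pow_succ]
    have := (Complex.cpow_ne_zero_iff (y := z)).2 (Or.inl complex_two_pi_ne_zero)
    simp only [Nat.add_sub_cancel]
    field_simp
  rw [integral_abs_inner_cpow_smul_angularFourier, ← SchwartzMap.fourier_coe,
    integral_abs_inner_cpow_smul_fourier hφ hξ hz, smul_smul, Complex.Gammaℂ_def]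
  congr 1
  linear_combination (Complex.Gamma (1 + z) * Complex.cos (π * (1 + z) / 2)) * two_pi_powers

end AngularFrequency

/-- for `q > -1` not an even integer, every even Schwartz function `φ`
supported away from the origin, and every `ξ ≠ 0`,
`∫_{ℝⁿ} |(x,ξ)|^q φ̂(x) dx = (2π)^{n-1} C_q ∫_ℝ |t|^{-1-q} φ(tξ) dt`. -/
theorem statement0 (n : ℕ) (hn : 1 ≤ n) (q : ℝ) (hq : -1 < q)
    (hqne : ∀ m : ℤ, q ≠ 2 * (m : ℝ))
    (φ : SchwartzMap (EuclideanSpace ℝ (Fin n)) ℂ)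
    (hφe : ∀ x, φ (-x) = φ x)
    (hφ0 : (0 : EuclideanSpace ℝ (Fin n)) ∉ tsupport ⇑φ)
    (ξ : EuclideanSpace ℝ (Fin n)) (hξ : ξ ≠ 0) :
    ∫ x, ((|⟪x, ξ⟫| ^ q : ℝ) : ℂ) * ftNU ⇑φ x
      = (((2 * π) ^ (n - 1) * Cq q : ℝ) : ℂ)
          * ∫ t : ℝ, ((|t| ^ (-1 - q) : ℝ) : ℂ) * φ (t • ξ) := by
  have key := statement0_general (z := q) (by simpa using hq) hφ0 hξ
  rw [finrank_euclideanSpace_fin, ← ofReal_Cq hq] at key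
  simpa [Complex.ofReal_cpow, abs_nonneg, ftNU, angularFourier] using key

end
end

section
/- Let n > 1 and let q > 0 be a real number that is not an even integer. If μ and ν are finite symmetric Borel signed measures on the unit sphere Ω of ℝⁿ such that ∫_Ω |(x,ξ)|^q dμ(ξ) = ∫_Ω |(x,ξ)|^q dν(ξ) for every x ∈ Ω, then μ = ν. -/
open MeasureTheory Metric
open scoped Real RealInnerProductSpace

noncomputable section

/-- Integral of a real function against a signed measure, via the Jordan decomposition. -/
def sInt {α : Type*} [MeasurableSpace α] (μ : SignedMeasure α) (f : α → ℝ) : ℝ :=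
  (∫ x, f x ∂μ.toJordanDecomposition.posPart) - ∫ x, f x ∂μ.toJordanDecomposition.negPart

/-!
Gaussian smoothing turns `t ↦ |t| ^ q` into a smooth function `G`, and Gaussian integration by
parts shows that `G'' = q * G - t * G'`. The Taylor coefficients of `G` at `0` of even order `2 * k`
are therefore nonzero multiples of `G 0 > 0`: the recursion multiplies by `q - 2 * j`, which does
not vanish because `q` is not an even integer. If two finite measures on the sphere have the same
transform `x ↦ ∫ |⟪x, ξ⟫| ^ q`, then averaging it over the Gaussian translates of a point `a` gives
that they have the same integrals `∫ G ⟪a, ξ⟫`, and differentiating along the line `s ↦ s • a` at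
`s = 0` that they have the same moments `∫ ⟪a, ξ⟫ ^ (2 * k)`. The odd moments of symmetric measures
vanish, and the moments determine a measure on the sphere. For signed measures, apply this to
`μ⁺ + ν⁻` and `ν⁺ + μ⁻`.
-/

open ProbabilityTheory Topology
open scoped NNReal ContDiff

theorem hasDerivAt_iteratedDeriv_of_contDiff {𝕜 F : Type*} [NontriviallyNormedField 𝕜]
    [NormedAddCommGroup F] [NormedSpace 𝕜 F] {f : 𝕜 → F} (hf : ContDiff 𝕜 ∞ f) (k : ℕ) (t : 𝕜) :
    HasDerivAt (iteratedDeriv k f) (iteratedDeriv (k + 1) f t) t := by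
  rw [iteratedDeriv_succ]
  exact (hf.differentiable_iteratedDeriv k (by exact_mod_cast ENat.natCast_lt_top k) t).hasDerivAt

section Gaussian

variable {m : ℝ} {v : ℝ≥0}

theorem hasDerivAt_gaussianPDFReal (u : ℝ) :
    HasDerivAt (gaussianPDFReal m v) (-((u - m) / v) * gaussianPDFReal m v u) u := by
  have hexponent : HasDerivAt (fun u : ℝ => -(u - m) ^ 2 / (2 * v)) (-((u - m) / v)) u := by
    have := (((hasDerivAt_id' u).sub_const m).fun_pow 2).fun_neg.div_const (2 * (v : ℝ))
    exact this.congr_deriv (by push_cast; ring)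
  exact (hexponent.exp.const_mul (√(2 * π * v))⁻¹).congr_deriv (by rw [gaussianPDFReal]; ring)

theorem integrable_gaussianReal_iff {F : Type*} [NormedAddCommGroup F] [NormedSpace ℝ F]
    {f : ℝ → F} (hv : v ≠ 0) :
    Integrable f (gaussianReal m v) ↔ Integrable fun u => gaussianPDFReal m v u • f u := by
  rw [gaussianReal_of_var_ne_zero _ hv,
    integrable_withDensity_iff_integrable_smul₀' (by fun_prop) (by simp [gaussianPDF])]
  simp only [toReal_gaussianPDF]

theorem integral_sub_mul_gaussianReal {f f' : ℝ → ℝ} (hderiv : ∀ u, HasDerivAt f (f' u) u)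
    (hf : Integrable f (gaussianReal m v)) (hf' : Integrable f' (gaussianReal m v))
    (hmul : Integrable (fun u => (u - m) * f u) (gaussianReal m v)) :
    ∫ u, (u - m) * f u ∂gaussianReal m v = v * ∫ u, f' u ∂gaussianReal m v := by
  obtain rfl | hv := eq_or_ne v 0
  · simp [gaussianReal_zero_var]
  rw [integrable_gaussianReal_iff hv] at hf hf' hmul
  have hv' : (v : ℝ) ≠ 0 := by exact_mod_cast hv
  have hprod : ∀ u, HasDerivAt (fun u => gaussianPDFReal m v u • f u)
      (gaussianPDFReal m v u • f' u - (v : ℝ)⁻¹ * gaussianPDFReal m v u • ((u - m) * f u)) u := by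
    intro u
    exact ((hasDerivAt_gaussianPDFReal u).fun_mul (hderiv u)).congr_deriv
      (by simp only [smul_eq_mul]; field_simp; ring)
  have hzero := integral_eq_zero_of_hasDerivAt_of_integrable hprod
    (hf'.sub (hmul.const_mul _)) hf
  rw [integral_sub hf' (hmul.const_mul _), integral_const_mul, sub_eq_zero] at hzero
  rw [integral_gaussianReal_eq_integral_smul hv, integral_gaussianReal_eq_integral_smul hv,
    hzero, mul_inv_cancel_left₀ hv']

theorem integral_comp_add_gaussianReal {F : Type*} [NormedAddCommGroup F] [NormedSpace ℝ F]
    (hv : v ≠ 0) (f : ℝ → F) (t : ℝ) :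
    ∫ u, f (u + t) ∂gaussianReal m v =
      ∫ u, Real.exp (t * (u - m) / v - t ^ 2 / (2 * v)) • f u ∂gaussianReal m v := by
  have hv' : (v : ℝ) ≠ 0 := by exact_mod_cast hv
  calc ∫ u, f (u + t) ∂gaussianReal m v
      = ∫ u, f u ∂gaussianReal (m + t) v := by
        rw [← gaussianReal_map_add_const, (measurableEmbedding_addRight t).integral_map]
    _ = ∫ u, Real.exp (t * (u - m) / v - t ^ 2 / (2 * v)) • f u ∂gaussianReal m v := by
        simp only [integral_gaussianReal_eq_integral_smul hv, gaussianPDFReal, smul_smul, mul_assoc,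
          ← Real.exp_add]
        congr! 5
        field_simp
        ring

end Gaussian

theorem hasDerivAt_abs_rpow_mul_self {q : ℝ} (hq : 0 ≤ q) (u : ℝ) :
    HasDerivAt (fun u : ℝ => |u| ^ q * u) ((q + 1) * |u| ^ q) u := by
  have hcont : Continuous fun u : ℝ => |u| ^ q := continuous_abs.rpow_const fun _ => Or.inr hq
  refine hasDerivAt_of_hasDerivAt_of_ne' (x := 0) (fun u hu => ?_)
    (hcont.mul continuous_id).continuousAt (hcont.const_mul (q + 1)).continuousAt u
  have hu' : |u| ≠ 0 := abs_ne_zero.2 hu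
  refine (((hasDerivAt_abs hu).rpow_const (Or.inl hu')).fun_mul (hasDerivAt_id' u)).congr_deriv ?_
  have hsign : (SignType.sign u : ℝ) * u = |u| := sign_mul_self u
  have hpow : |u| ^ (q - 1) * |u| = |u| ^ q := by
    rw [Real.rpow_sub_one hu', div_mul_cancel₀ _ hu']
  linear_combination q * |u| ^ (q - 1) * hsign + q * hpow

/-- The standard Gaussian weighted by `|u| ^ q`, whose moment generating function is, up to a
Gaussian factor, the Gaussian smoothing of `|u| ^ q`. -/
def absRpowGaussian (q : ℝ) : Measure ℝ :=
  (gaussianReal 0 1).withDensity fun u => ENNReal.ofReal (|u| ^ q)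

section AbsRpowGaussian

variable {q : ℝ}

theorem integrable_absRpowGaussian_iff {f : ℝ → ℝ} :
    Integrable f (absRpowGaussian q) ↔ Integrable (fun u => |u| ^ q * f u) (gaussianReal 0 1) := by
  rw [absRpowGaussian, integrable_withDensity_iff_integrable_smul' (by fun_prop) (by simp)]
  simp only [ENNReal.toReal_ofReal (Real.rpow_nonneg (abs_nonneg _) q), smul_eq_mul]

theorem integral_absRpowGaussian (f : ℝ → ℝ) :
    ∫ u, f u ∂absRpowGaussian q = ∫ u, |u| ^ q * f u ∂gaussianReal 0 1 := by
  rw [absRpowGaussian, integral_withDensity_eq_integral_toReal_smul (by fun_prop) (by simp)]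
  simp only [ENNReal.toReal_ofReal (Real.rpow_nonneg (abs_nonneg _) q), smul_eq_mul]

theorem integrable_exp_mul_absRpowGaussian (hq : 0 ≤ q) (t : ℝ) :
    Integrable (fun u => Real.exp (t * u)) (absRpowGaussian q) :=
  integrable_absRpowGaussian_iff.2 <|
    integrable_rpow_abs_mul_exp_of_integrable_exp_mul (X := id) one_ne_zero
      (integrable_exp_mul_gaussianReal _) (integrable_exp_mul_gaussianReal _) hq

theorem integrableExpSet_id_absRpowGaussian (hq : 0 ≤ q) :
    integrableExpSet id (absRpowGaussian q) = Set.univ :=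
  Set.eq_univ_of_forall (integrable_exp_mul_absRpowGaussian hq)

theorem integrable_pow_mul_exp_absRpowGaussian (hq : 0 ≤ q) (n : ℕ) (t : ℝ) :
    Integrable (fun u => u ^ n * Real.exp (t * u)) (absRpowGaussian q) :=
  integrable_pow_mul_exp_of_mem_interior_integrableExpSet (X := id)
    (by simp [integrableExpSet_id_absRpowGaussian hq]) n

theorem mgf_absRpowGaussian_pos (hq : 0 ≤ q) (t : ℝ) : 0 < mgf id (absRpowGaussian q) t := by
  refine mgf_pos' (fun h0 => ?_) (integrable_exp_mul_absRpowGaussian hq t)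
  have hzero : ∀ᵐ u ∂gaussianReal 0 1, ENNReal.ofReal (|u| ^ q) = 0 :=
    (withDensity_eq_zero_iff (by fun_prop)).1 h0
  have : NullSingletonClass (gaussianReal 0 1) := nullSingletonClass_gaussianReal one_ne_zero
  obtain ⟨u, hu, hu0⟩ := (hzero.and (Measure.ae_ne _ 0)).exists
  exact hu.not_gt (ENNReal.ofReal_pos.2 (Real.rpow_pos_of_pos (abs_pos.2 hu0) q))

theorem contDiff_mgf_absRpowGaussian (hq : 0 ≤ q) : ContDiff ℝ ∞ (mgf id (absRpowGaussian q)) := by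
  have hanalytic := analyticOnNhd_mgf (X := id) (μ := absRpowGaussian q)
  rw [integrableExpSet_id_absRpowGaussian hq, interior_univ] at hanalytic
  exact hanalytic.contDiff

theorem iteratedDeriv_mgf_absRpowGaussian (hq : 0 ≤ q) (n : ℕ) (t : ℝ) :
    iteratedDeriv n (mgf id (absRpowGaussian q)) t =
      ∫ u, u ^ n * Real.exp (t * u) ∂absRpowGaussian q :=
  iteratedDeriv_mgf (by simp [integrableExpSet_id_absRpowGaussian hq]) n

/- Gaussian integration by parts applied to `u ↦ |u| ^ q * u * exp (t * u)`. -/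
theorem iteratedDeriv_two_mgf_absRpowGaussian (hq : 0 ≤ q) (t : ℝ) :
    iteratedDeriv 2 (mgf id (absRpowGaussian q)) t =
      (q + 1) * mgf id (absRpowGaussian q) t + t * deriv (mgf id (absRpowGaussian q)) t := by
  have h_int (n : ℕ) : Integrable (fun u => |u| ^ q * (u ^ n * Real.exp (t * u)))
      (gaussianReal 0 1) :=
    integrable_absRpowGaussian_iff.1 (integrable_pow_mul_exp_absRpowGaussian hq n t)
  have hderiv (u : ℝ) : HasDerivAt (fun u => |u| ^ q * u * Real.exp (t * u))
      ((q + 1) * (|u| ^ q * (u ^ 0 * Real.exp (t * u)))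
        + t * (|u| ^ q * (u ^ 1 * Real.exp (t * u)))) u :=
    ((hasDerivAt_abs_rpow_mul_self hq u).fun_mul
      ((hasDerivAt_const_mul t).exp)).congr_deriv (by ring)
  have hstein := integral_sub_mul_gaussianReal hderiv
    ((h_int 1).congr (ae_of_all _ fun u => by ring))
    (((h_int 0).const_mul _).add ((h_int 1).const_mul _))
    ((h_int 2).congr (ae_of_all _ fun u => by ring))
  rw [integral_add ((h_int 0).const_mul _) ((h_int 1).const_mul _), integral_const_mul,
    integral_const_mul, NNReal.coe_one, one_mul] at hstein
  have hmoment (n : ℕ) : iteratedDeriv n (mgf id (absRpowGaussian q)) t =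
      ∫ u, |u| ^ q * (u ^ n * Real.exp (t * u)) ∂gaussianReal 0 1 := by
    rw [iteratedDeriv_mgf_absRpowGaussian hq, integral_absRpowGaussian]
  rw [← hmoment 0, ← hmoment 1, iteratedDeriv_zero, iteratedDeriv_one] at hstein
  rw [← hstein, hmoment 2]
  congr! 2 with u
  ring

end AbsRpowGaussian

/-- The Gaussian smoothing `t ↦ 𝔼 |g + t| ^ q` of `|t| ^ q`, where `g` is a standard Gaussian. -/
def smoothedAbsRpow (q t : ℝ) : ℝ := ∫ u, |u + t| ^ q ∂gaussianReal 0 1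

section SmoothedAbsRpow

variable {q : ℝ}

theorem smoothedAbsRpow_eq_exp_mul_mgf (q t : ℝ) :
    smoothedAbsRpow q t = Real.exp (-t ^ 2 / 2) * mgf id (absRpowGaussian q) t := by
  rw [smoothedAbsRpow, integral_comp_add_gaussianReal one_ne_zero fun u => |u| ^ q, mgf,
    integral_absRpowGaussian, ← integral_const_mul]
  congr! 2
  simp only [id, smul_eq_mul, NNReal.coe_one]
  rw [mul_left_comm, ← Real.exp_add, mul_comm]
  congr! 2
  ring

theorem smoothedAbsRpow_pos (hq : 0 ≤ q) (t : ℝ) : 0 < smoothedAbsRpow q t := by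
  rw [smoothedAbsRpow_eq_exp_mul_mgf]
  exact mul_pos (Real.exp_pos _) (mgf_absRpowGaussian_pos hq t)

theorem contDiff_smoothedAbsRpow (hq : 0 ≤ q) : ContDiff ℝ ∞ (smoothedAbsRpow q) := by
  rw [funext (smoothedAbsRpow_eq_exp_mul_mgf q)]
  exact ContDiff.mul (by fun_prop) (contDiff_mgf_absRpowGaussian hq)

theorem hasDerivAt_exp_neg_sq_div_two (t : ℝ) :
    HasDerivAt (fun t : ℝ => Real.exp (-t ^ 2 / 2)) (-t * Real.exp (-t ^ 2 / 2)) t :=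
  (((hasDerivAt_id' t).fun_pow 2).fun_neg.div_const 2).exp.congr_deriv (by push_cast; ring)

theorem deriv_smoothedAbsRpow (hq : 0 ≤ q) (t : ℝ) : deriv (smoothedAbsRpow q) t =
    Real.exp (-t ^ 2 / 2) * deriv (mgf id (absRpowGaussian q)) t - t * smoothedAbsRpow q t := by
  have hmgf := (contDiff_mgf_absRpowGaussian hq).differentiable (by simp) t
  rw [smoothedAbsRpow_eq_exp_mul_mgf, funext (smoothedAbsRpow_eq_exp_mul_mgf q),
    ((hasDerivAt_exp_neg_sq_div_two t).fun_mul hmgf.hasDerivAt).deriv]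
  ring

theorem iteratedDeriv_two_smoothedAbsRpow (hq : 0 ≤ q) (t : ℝ) :
    iteratedDeriv 2 (smoothedAbsRpow q) t =
      q * smoothedAbsRpow q t - t * deriv (smoothedAbsRpow q) t := by
  have hsmooth := (contDiff_smoothedAbsRpow hq).differentiable (by simp) t
  have hmgf : HasDerivAt (deriv (mgf id (absRpowGaussian q)))
      (iteratedDeriv 2 (mgf id (absRpowGaussian q)) t) t := by
    simpa only [iteratedDeriv_one] using
      hasDerivAt_iteratedDeriv_of_contDiff (contDiff_mgf_absRpowGaussian hq) 1 t
  have hderiv := ((hasDerivAt_exp_neg_sq_div_two t).fun_mul hmgf).fun_sub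
    ((hasDerivAt_id' t).fun_mul hsmooth.hasDerivAt)
  rw [iteratedDeriv_succ, iteratedDeriv_one, funext (deriv_smoothedAbsRpow hq), hderiv.deriv,
    iteratedDeriv_two_mgf_absRpowGaussian hq, deriv_smoothedAbsRpow hq]
  linear_combination -(q + 1) * smoothedAbsRpow_eq_exp_mul_mgf q t

end SmoothedAbsRpow

section ODE

variable {𝕜 : Type*} [NontriviallyNormedField 𝕜] {f : 𝕜 → 𝕜} {c : 𝕜}

theorem iteratedDeriv_add_two_of_ode (hf : ContDiff 𝕜 ∞ f)
    (hode : ∀ t, iteratedDeriv 2 f t = c * f t - t * deriv f t) (m : ℕ) (t : 𝕜) :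
    iteratedDeriv (m + 2) f t =
      (c - m) * iteratedDeriv m f t - t * iteratedDeriv (m + 1) f t := by
  have hderiv := hasDerivAt_iteratedDeriv_of_contDiff hf
  induction m generalizing t with
  | zero => simpa [iteratedDeriv_one] using hode t
  | succ m ih =>
    have hstep := ((hderiv m t).const_mul (c - m)).fun_sub
      ((hasDerivAt_id' t).fun_mul (hderiv (m + 1) t))
    refine ((hderiv (m + 2) t).unique (hstep.congr_of_eventuallyEq (.of_forall ih))).trans ?_
    push_cast
    ring

theorem iteratedDeriv_two_mul_zero_of_ode (hf : ContDiff 𝕜 ∞ f)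
    (hode : ∀ t, iteratedDeriv 2 f t = c * f t - t * deriv f t) (k : ℕ) :
    iteratedDeriv (2 * k) f 0 = (∏ j ∈ Finset.range k, (c - 2 * j)) * f 0 := by
  induction k with
  | zero => simp
  | succ k ih =>
    rw [mul_add_one, iteratedDeriv_add_two_of_ode hf hode, ih, Finset.prod_range_succ]
    push_cast
    ring

end ODE

theorem iteratedDeriv_two_mul_smoothedAbsRpow_zero_ne_zero {q : ℝ} (hq : 0 ≤ q)
    (hqne : ∀ k : ℕ, q ≠ 2 * k) (k : ℕ) : iteratedDeriv (2 * k) (smoothedAbsRpow q) 0 ≠ 0 := by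
  rw [iteratedDeriv_two_mul_zero_of_ode (contDiff_smoothedAbsRpow hq)
    (iteratedDeriv_two_smoothedAbsRpow hq)]
  exact mul_ne_zero (Finset.prod_ne_zero_iff.2 fun j _ => sub_ne_zero.2 (hqne j))
    (smoothedAbsRpow_pos hq 0).ne'

section Bounded

variable {Ω : Type*} {mΩ : MeasurableSpace Ω} {P : Measure Ω} [IsFiniteMeasure P]

theorem integrable_comp_of_ae_mem_isCompact {α F : Type*} [TopologicalSpace α]
    [NormedAddCommGroup F] {X : Ω → α} {K : Set α} {g : α → F}
    (hX : AEStronglyMeasurable X P) (hK : IsCompact K) (hXK : ∀ᵐ w ∂P, X w ∈ K)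
    (hg : Continuous g) : Integrable (fun w => g (X w)) P := by
  obtain ⟨C, hC⟩ := hK.exists_bound_of_continuousOn hg.continuousOn
  exact .of_bound (hg.comp_aestronglyMeasurable hX) C (hXK.mono fun w => hC (X w))

variable {X : Ω → ℝ} {K : Set ℝ} {φ : ℝ → ℝ}

theorem hasDerivAt_integral_pow_mul_comp_mul (hX : AEStronglyMeasurable X P) (hK : IsCompact K)
    (hXK : ∀ᵐ w ∂P, X w ∈ K) (hφ : ContDiff ℝ 1 φ) (m : ℕ) (s : ℝ) :
    HasDerivAt (fun s => ∫ w, X w ^ m * φ (s * X w) ∂P)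
      (∫ w, X w ^ (m + 1) * deriv φ (s * X w) ∂P) s := by
  have hcont : Continuous fun p : ℝ × ℝ => p.2 ^ (m + 1) * deriv φ (p.1 * p.2) := by
    have := hφ.continuous_deriv le_rfl
    fun_prop
  have h_int (s : ℝ) : Integrable (fun w => X w ^ m * φ (s * X w)) P :=
    integrable_comp_of_ae_mem_isCompact (g := fun x => x ^ m * φ (s * x)) hX hK hXK
      (by have := hφ.continuous; fun_prop)
  obtain ⟨C, hC⟩ :=
    ((isCompact_closedBall s 1).prod hK).exists_bound_of_continuousOn hcont.continuousOn
  refine (hasDerivAt_integral_of_dominated_loc_of_deriv_le (bound := fun _ => C)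
    (F' := fun s w => X w ^ (m + 1) * deriv φ (s * X w))
    (closedBall_mem_nhds s one_pos) (.of_forall fun s => (h_int s).1) (h_int s)
    ((hcont.comp (.prodMk_right s)).comp_aestronglyMeasurable hX)
    (hXK.mono fun w hw s hs => hC (s, X w) ⟨hs, hw⟩) (integrable_const C)
    (ae_of_all _ fun w s _ => ?_)).2
  have hcomp := (hφ.differentiable one_ne_zero (s * X w)).hasDerivAt.comp s
    (hasDerivAt_mul_const (X w))
  exact (hcomp.const_mul (X w ^ m)).congr_deriv (by ring)

theorem iteratedDeriv_integral_comp_mul (hX : AEStronglyMeasurable X P) (hK : IsCompact K)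
    (hXK : ∀ᵐ w ∂P, X w ∈ K) (hφ : ContDiff ℝ ∞ φ) (m : ℕ) :
    iteratedDeriv m (fun s => ∫ w, φ (s * X w) ∂P) =
      fun s => ∫ w, X w ^ m * iteratedDeriv m φ (s * X w) ∂P := by
  induction m with
  | zero => simp
  | succ m ih =>
    ext s
    have hsmooth : ContDiff ℝ 1 (iteratedDeriv m φ) := by
      rw [iteratedDeriv_eq_iterate]
      exact contDiff_infty.1 (hφ.iterate_deriv m) 1
    rw [iteratedDeriv_succ, ih, iteratedDeriv_succ]
    exact (hasDerivAt_integral_pow_mul_comp_mul hX hK hXK hsmooth m s).deriv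

end Bounded

section Moments

theorem eventuallyEq_of_iteratedDeriv_eq {𝕜 : Type*} [NontriviallyNormedField 𝕜]
    [CompleteSpace 𝕜] [CharZero 𝕜] {f g : 𝕜 → 𝕜} {x : 𝕜} (hf : AnalyticAt 𝕜 f x)
    (hg : AnalyticAt 𝕜 g x) (h : ∀ n, iteratedDeriv n f x = iteratedDeriv n g x) : f =ᶠ[𝓝 x] g := by
  have hgf := hg.hasFPowerSeriesAt
  simp only [← h] at hgf
  filter_upwards [hf.hasFPowerSeriesAt.eventually_hasSum_sub, hgf.eventually_hasSum_sub]
    with y hfy hgy using hfy.unique hgy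

variable {Ω Ω' : Type*} {mΩ : MeasurableSpace Ω} {mΩ' : MeasurableSpace Ω'}
  {P : Measure Ω} {Q : Measure Ω'} [IsFiniteMeasure P] [IsFiniteMeasure Q]

theorem map_eq_map_of_integral_pow_eq {X : Ω → ℝ} {Y : Ω' → ℝ}
    (hX : 0 ∈ interior (integrableExpSet X P)) (hY : 0 ∈ interior (integrableExpSet Y Q))
    (h : ∀ n : ℕ, ∫ w, X w ^ n ∂P = ∫ w, Y w ^ n ∂Q) : P.map X = Q.map Y := by
  set I := interior (integrableExpSet X P) ∩ interior (integrableExpSet Y Q)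
  have hmoment (n : ℕ) :
      iteratedDeriv n (complexMGF X P) 0 = iteratedDeriv n (complexMGF Y Q) 0 := by
    rw [iteratedDeriv_complexMGF hX, iteratedDeriv_complexMGF hY]
    simpa [← Complex.ofReal_pow, integral_complex_ofReal] using h n
  have hstrip : Set.EqOn (complexMGF X P) (complexMGF Y Q) (Complex.re ⁻¹' I) :=
    (analyticOnNhd_complexMGF.mono fun z hz => hz.1).eqOn_of_preconnected_of_eventuallyEq
      (analyticOnNhd_complexMGF.mono fun z hz => hz.2)
      ((convex_integrableExpSet.interior.inter convex_integrableExpSet.interior).linear_preimage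
        Complex.reLm).isPreconnected
      (z₀ := 0) ⟨hX, hY⟩
      (eventuallyEq_of_iteratedDeriv_eq (analyticAt_complexMGF hX) (analyticAt_complexMGF hY)
        hmoment)
  refine Measure.ext_of_charFun (funext fun t => ?_)
  rw [← complexMGF_mul_I (aemeasurable_of_mem_interior_integrableExpSet hX),
    ← complexMGF_mul_I (aemeasurable_of_mem_interior_integrableExpSet hY)]
  exact hstrip (by simpa [I] using ⟨hX, hY⟩)

theorem ext_of_integral_strongDual_pow_eq {E : Type*} [NormedAddCommGroup E] [NormedSpace ℝ E]
    [CompleteSpace E] [SecondCountableTopology E] [MeasurableSpace E] [BorelSpace E]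
    {P Q : Measure E} [IsFiniteMeasure P] [IsFiniteMeasure Q]
    (hP : ∀ L : StrongDual ℝ E, 0 ∈ interior (integrableExpSet L P))
    (hQ : ∀ L : StrongDual ℝ E, 0 ∈ interior (integrableExpSet L Q))
    (h : ∀ (L : StrongDual ℝ E) (n : ℕ), ∫ x, L x ^ n ∂P = ∫ x, L x ^ n ∂Q) : P = Q := by
  refine Measure.ext_of_charFunDual (funext fun L => ?_)
  rw [charFunDual_eq_charFun_map_one, charFunDual_eq_charFun_map_one,
    map_eq_map_of_integral_pow_eq (hP L) (hQ L) (h L)]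

end Moments

section CosineTransform

variable {E : Type*} [NormedAddCommGroup E] [InnerProductSpace ℝ E] {q : ℝ}

theorem continuous_abs_inner_rpow (hq : 0 ≤ q) :
    Continuous fun p : E × E => |⟪p.1, p.2⟫| ^ q :=
  (by fun_prop : Continuous fun p : E × E => |⟪p.1, p.2⟫|).rpow_const fun _ => .inr hq

variable [MeasurableSpace E] {P Q : Measure E}

/-- The `q`-cosine transform `x ↦ ∫ |⟪x, ξ⟫| ^ q ∂P(ξ)` of a measure, the function that the
Blaschke–Levy representation theorem inverts. -/
def cosineTransform (q : ℝ) (P : Measure E) (x : E) : ℝ := ∫ ξ, |⟪x, ξ⟫| ^ q ∂P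

theorem cosineTransform_smul (q : ℝ) (P : Measure E) (c : ℝ) (x : E) :
    cosineTransform q P (c • x) = |c| ^ q * cosineTransform q P x := by
  simp only [cosineTransform, real_inner_smul_left, abs_mul,
    Real.mul_rpow (abs_nonneg _) (abs_nonneg _), integral_const_mul]

theorem cosineTransform_eq_of_eqOn_sphere (hq : q ≠ 0)
    (h : Set.EqOn (cosineTransform q P) (cosineTransform q Q) (sphere 0 1)) :
    cosineTransform q P = cosineTransform q Q := by
  ext x
  obtain rfl | hx := eq_or_ne x 0
  · simp [cosineTransform, Real.zero_rpow hq]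
  · rw [← NormedSpace.norm_smul_normalize x, cosineTransform_smul, cosineTransform_smul,
      h (by simp [hx])]

variable [BorelSpace E]

theorem integral_inner_pow_eq_zero_of_odd [P.IsNegInvariant] (a : E) {m : ℕ} (hm : Odd m) :
    ∫ ξ, ⟪a, ξ⟫ ^ m ∂P = 0 := by
  have h := integral_neg_eq_self (fun ξ : E => ⟪a, ξ⟫ ^ m) P
  simp only [inner_neg_right, hm.neg_pow, integral_neg] at h
  linarith

variable [FiniteDimensional ℝ E]

theorem integrable_of_ae_mem_sphere {F : Type*} [NormedAddCommGroup F] [IsFiniteMeasure P]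
    (hP : ∀ᵐ ξ ∂P, ξ ∈ sphere (0 : E) 1) {f : E → F} (hf : Continuous f) : Integrable f P :=
  integrable_comp_of_ae_mem_isCompact aestronglyMeasurable_id (isCompact_sphere 0 1) hP hf

theorem map_inner_stdGaussian (ξ : E) :
    (stdGaussian E).map (fun x => ⟪x, ξ⟫) = gaussianReal 0 (‖ξ‖₊ ^ 2) := by
  have h := IsGaussian.map_eq_gaussianReal (μ := stdGaussian E) (innerSL ℝ ξ)
  rw [integral_strongDual_stdGaussian, variance_dual_stdGaussian, innerSL_apply_norm] at h
  convert h using 2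
  · ext x
    simp [real_inner_comm]
  · ext
    simp

theorem integral_abs_inner_add_rpow_stdGaussian (q : ℝ) {ξ : E} (hξ : ‖ξ‖ = 1) (a : E) :
    ∫ x, |⟪x + a, ξ⟫| ^ q ∂stdGaussian E = smoothedAbsRpow q ⟪a, ξ⟫ := by
  have hmarginal : (stdGaussian E).map (fun x => ⟪x, ξ⟫) = gaussianReal 0 1 := by
    rw [map_inner_stdGaussian, ← one_pow 2]
    congr
    exact NNReal.eq hξ
  rw [smoothedAbsRpow, ← hmarginal, integral_map (by fun_prop)
    (by fun_prop : Measurable fun u : ℝ => |u + ⟪a, ξ⟫| ^ q).aestronglyMeasurable]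
  simp only [inner_add_left]

theorem integrable_norm_add_rpow_stdGaussian (hq : 0 ≤ q) (a : E) :
    Integrable (fun x => ‖x + a‖ ^ q) (stdGaussian E) := by
  have hid : MemLp (fun x : E => x) (ENNReal.ofReal q) (stdGaussian E) :=
    IsGaussian.memLp_id _ _ ENNReal.ofReal_ne_top
  simpa only [ENNReal.toReal_ofReal hq, Pi.add_apply] using
    (hid.add (memLp_const a)).integrable_norm_rpow'

theorem integrable_abs_inner_add_rpow_prod [IsFiniteMeasure P] (hq : 0 ≤ q)
    (hP : ∀ᵐ ξ ∂P, ξ ∈ sphere (0 : E) 1) (a : E) :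
    Integrable (fun p : E × E => |⟪p.1 + a, p.2⟫| ^ q) ((stdGaussian E).prod P) := by
  refine ((integrable_norm_add_rpow_stdGaussian hq a).comp_fst P).mono'
    ((continuous_abs_inner_rpow hq).comp (by fun_prop :
      Continuous fun p : E × E => (p.1 + a, p.2))).aestronglyMeasurable ?_
  filter_upwards [Measure.quasiMeasurePreserving_snd.ae hP] with p hp
  rw [Real.norm_of_nonneg (by positivity)]
  gcongr
  simpa [mem_sphere_zero_iff_norm.1 hp] using abs_real_inner_le_norm (p.1 + a) p.2

theorem integral_cosineTransform_add_stdGaussian [IsFiniteMeasure P] (hq : 0 ≤ q)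
    (hP : ∀ᵐ ξ ∂P, ξ ∈ sphere (0 : E) 1) (a : E) :
    ∫ x, cosineTransform q P (x + a) ∂stdGaussian E = ∫ ξ, smoothedAbsRpow q ⟪a, ξ⟫ ∂P := by
  simp only [cosineTransform]
  rw [integral_integral_swap (integrable_abs_inner_add_rpow_prod hq hP a)]
  refine integral_congr_ae (hP.mono fun ξ hξ => ?_)
  exact integral_abs_inner_add_rpow_stdGaussian q (mem_sphere_zero_iff_norm.1 hξ) a

theorem iteratedDeriv_integral_smoothedAbsRpow_inner_zero [IsFiniteMeasure P] (hq : 0 ≤ q)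
    (hP : ∀ᵐ ξ ∂P, ξ ∈ sphere (0 : E) 1) (a : E) (m : ℕ) :
    iteratedDeriv m (fun s : ℝ => ∫ ξ, smoothedAbsRpow q ⟪s • a, ξ⟫ ∂P) 0 =
      (∫ ξ, ⟪a, ξ⟫ ^ m ∂P) * iteratedDeriv m (smoothedAbsRpow q) 0 := by
  have hinner : Continuous fun ξ : E => ⟪a, ξ⟫ := by fun_prop
  simp only [real_inner_smul_left]
  rw [iteratedDeriv_integral_comp_mul hinner.aestronglyMeasurable
    ((isCompact_sphere (0 : E) 1).image hinner) (hP.mono fun ξ => Set.mem_image_of_mem _)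
    (contDiff_smoothedAbsRpow hq)]
  simp only [zero_mul, integral_mul_const]

variable [IsFiniteMeasure P] [IsFiniteMeasure Q]

theorem integral_inner_pow_two_mul_eq_of_cosineTransform_eq (hq : 0 ≤ q) (hqne : ∀ k : ℕ, q ≠ 2 * k)
    (hP : ∀ᵐ ξ ∂P, ξ ∈ sphere (0 : E) 1) (hQ : ∀ᵐ ξ ∂Q, ξ ∈ sphere (0 : E) 1)
    (h : cosineTransform q P = cosineTransform q Q) (a : E) (k : ℕ) :
    ∫ ξ, ⟪a, ξ⟫ ^ (2 * k) ∂P = ∫ ξ, ⟪a, ξ⟫ ^ (2 * k) ∂Q := by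
  refine mul_right_cancel₀ (iteratedDeriv_two_mul_smoothedAbsRpow_zero_ne_zero hq hqne k) ?_
  simp only [← iteratedDeriv_integral_smoothedAbsRpow_inner_zero hq hP,
    ← iteratedDeriv_integral_smoothedAbsRpow_inner_zero hq hQ,
    ← integral_cosineTransform_add_stdGaussian hq hP,
    ← integral_cosineTransform_add_stdGaussian hq hQ, h]

theorem ext_of_integral_inner_pow_eq (hP : ∀ᵐ ξ ∂P, ξ ∈ sphere (0 : E) 1)
    (hQ : ∀ᵐ ξ ∂Q, ξ ∈ sphere (0 : E) 1)
    (h : ∀ (a : E) (m : ℕ), ∫ ξ, ⟪a, ξ⟫ ^ m ∂P = ∫ ξ, ⟪a, ξ⟫ ^ m ∂Q) : P = Q := by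
  have hexp {M : Measure E} [IsFiniteMeasure M] (hM : ∀ᵐ ξ ∂M, ξ ∈ sphere (0 : E) 1)
      (L : StrongDual ℝ E) : 0 ∈ interior (integrableExpSet L M) := by
    have huniv : integrableExpSet L M = Set.univ :=
      Set.eq_univ_of_forall fun t => integrable_of_ae_mem_sphere hM (by fun_prop)
    simp [huniv]
  refine ext_of_integral_strongDual_pow_eq (hexp hP) (hexp hQ) fun L m => ?_
  simpa using h ((InnerProductSpace.toDual ℝ E).symm L) m

theorem ext_of_cosineTransform_eqOn_sphere [P.IsNegInvariant] [Q.IsNegInvariant] (hq : 0 < q)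
    (hqne : ∀ k : ℕ, q ≠ 2 * k) (hP : ∀ᵐ ξ ∂P, ξ ∈ sphere (0 : E) 1)
    (hQ : ∀ᵐ ξ ∂Q, ξ ∈ sphere (0 : E) 1)
    (h : Set.EqOn (cosineTransform q P) (cosineTransform q Q) (sphere 0 1)) : P = Q := by
  refine ext_of_integral_inner_pow_eq hP hQ fun a m => ?_
  obtain hm | hm := m.even_or_odd
  · obtain ⟨k, rfl⟩ := hm.two_dvd
    exact integral_inner_pow_two_mul_eq_of_cosineTransform_eq hq.le hqne hP hQ
      (cosineTransform_eq_of_eqOn_sphere hq.ne' h) a k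
  · rw [integral_inner_pow_eq_zero_of_odd a hm, integral_inner_pow_eq_zero_of_odd a hm]

end CosineTransform

section SignedMeasure

variable {α : Type*} [MeasurableSpace α] {μ ν : SignedMeasure α}

theorem ae_mem_posPart_add_negPart {s : Set α} (hμ : μ.totalVariation sᶜ = 0)
    (hν : ν.totalVariation sᶜ = 0) :
    ∀ᵐ x ∂(μ.toJordanDecomposition.posPart + ν.toJordanDecomposition.negPart), x ∈ s :=
  ae_add_measure_iff.2 ⟨(add_eq_zero.1 hμ).1, (add_eq_zero.1 hν).2⟩

theorem eq_of_posPart_add_negPart_eq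
    (h : μ.toJordanDecomposition.posPart + ν.toJordanDecomposition.negPart =
      ν.toJordanDecomposition.posPart + μ.toJordanDecomposition.negPart) : μ = ν := by
  ext A hA
  have hA' := congrArg (Measure.real · A) h
  beta_reduce at hA'
  rw [measureReal_add_apply, measureReal_add_apply] at hA'
  rw [μ.apply_eq_posPart_real_sub_negPart_real hA, ν.apply_eq_posPart_real_sub_negPart_real hA]
  linarith

theorem sInt_eq_sInt_iff {f : α → ℝ}
    (hf : Integrable f (μ.toJordanDecomposition.posPart + ν.toJordanDecomposition.negPart))
    (hf' : Integrable f (ν.toJordanDecomposition.posPart + μ.toJordanDecomposition.negPart)) :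
    sInt μ f = sInt ν f ↔
      ∫ x, f x ∂(μ.toJordanDecomposition.posPart + ν.toJordanDecomposition.negPart) =
        ∫ x, f x ∂(ν.toJordanDecomposition.posPart + μ.toJordanDecomposition.negPart) := by
  rw [integral_add_measure hf.left_of_add_measure hf.right_of_add_measure,
    integral_add_measure hf'.left_of_add_measure hf'.right_of_add_measure, sInt, sInt,
    sub_eq_sub_iff_add_eq_add]

section Neg

variable [InvolutiveNeg α] [MeasurableNeg α]

/-- The Jordan decomposition of the reflection `A ↦ μ (-A)` of a signed measure with Jordan
decomposition `j`. -/
def reflectedJordanDecomposition (j : JordanDecomposition α) : JordanDecomposition α where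
  posPart := j.posPart.neg
  negPart := j.negPart.neg
  posPart_finite := by unfold Measure.neg; infer_instance
  negPart_finite := by unfold Measure.neg; infer_instance
  mutuallySingular := by
    obtain ⟨s, hs, hpos, hneg⟩ := j.mutuallySingular
    exact ⟨-s, hs.neg, by simpa, by simpa⟩

theorem reflectedJordanDecomposition_toJordanDecomposition
    (h : ∀ A, MeasurableSet A → μ A = μ (Neg.neg ⁻¹' A)) :
    reflectedJordanDecomposition μ.toJordanDecomposition = μ.toJordanDecomposition := by
  symm
  refine SignedMeasure.toJordanDecomposition_eq ?_
  ext A hA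
  rw [h A hA, μ.apply_eq_posPart_real_sub_negPart_real (measurable_neg hA)]
  simp [JordanDecomposition.toSignedMeasure, reflectedJordanDecomposition, hA, measureReal_def]

theorem isNegInvariant_posPart_of_apply_neg_eq
    (h : ∀ A, MeasurableSet A → μ A = μ (Neg.neg ⁻¹' A)) :
    μ.toJordanDecomposition.posPart.IsNegInvariant :=
  ⟨congrArg JordanDecomposition.posPart (reflectedJordanDecomposition_toJordanDecomposition h)⟩

theorem isNegInvariant_negPart_of_apply_neg_eq
    (h : ∀ A, MeasurableSet A → μ A = μ (Neg.neg ⁻¹' A)) :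
    μ.toJordanDecomposition.negPart.IsNegInvariant :=
  ⟨congrArg JordanDecomposition.negPart (reflectedJordanDecomposition_toJordanDecomposition h)⟩

theorem isNegInvariant_posPart_add_negPart
    (hμ : ∀ A, MeasurableSet A → μ A = μ (Neg.neg ⁻¹' A))
    (hν : ∀ A, MeasurableSet A → ν A = ν (Neg.neg ⁻¹' A)) :
    (μ.toJordanDecomposition.posPart + ν.toJordanDecomposition.negPart).IsNegInvariant := by
  have := isNegInvariant_posPart_of_apply_neg_eq hμ
  have := isNegInvariant_negPart_of_apply_neg_eq hν
  constructor
  rw [Measure.neg_def, Measure.map_add _ _ measurable_neg, Measure.map_neg_eq_self,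
    Measure.map_neg_eq_self]

end Neg

end SignedMeasure

theorem statement3_general {E : Type*} [NormedAddCommGroup E] [InnerProductSpace ℝ E]
    [FiniteDimensional ℝ E] [MeasurableSpace E] [BorelSpace E] {q : ℝ} (hq : 0 < q)
    (hqne : ∀ k : ℕ, q ≠ 2 * k) {μ ν : SignedMeasure E}
    (hμs : μ.totalVariation (sphere (0 : E) 1)ᶜ = 0)
    (hνs : ν.totalVariation (sphere (0 : E) 1)ᶜ = 0)
    (hμsym : ∀ A, MeasurableSet A → μ A = μ (Neg.neg ⁻¹' A))
    (hνsym : ∀ A, MeasurableSet A → ν A = ν (Neg.neg ⁻¹' A))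
    (heq : ∀ x ∈ sphere (0 : E) 1,
      sInt μ (fun ξ => |⟪x, ξ⟫| ^ q) = sInt ν (fun ξ => |⟪x, ξ⟫| ^ q)) :
    μ = ν := by
  have hsphere := ae_mem_posPart_add_negPart hμs hνs
  have hsphere' := ae_mem_posPart_add_negPart hνs hμs
  have := isNegInvariant_posPart_add_negPart hμsym hνsym
  have := isNegInvariant_posPart_add_negPart hνsym hμsym
  refine eq_of_posPart_add_negPart_eq
    (ext_of_cosineTransform_eqOn_sphere hq hqne hsphere hsphere' fun x hx => ?_)
  have hcont : Continuous fun ξ => |⟪x, ξ⟫| ^ q :=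
    (continuous_abs_inner_rpow hq.le).comp (.prodMk_right x)
  exact (sInt_eq_sInt_iff (integrable_of_ae_mem_sphere hsphere hcont)
    (integrable_of_ae_mem_sphere hsphere' hcont)).1 (heq x hx)

/-- uniqueness in the Blaschke–Levy representation: for `n > 1` and `q > 0`
not an even integer, if two finite symmetric Borel signed measures `μ`, `ν` on the unit
sphere `Ω` of `ℝⁿ` satisfy `∫_Ω |(x,ξ)|^q dμ(ξ) = ∫_Ω |(x,ξ)|^q dν(ξ)` for all `x ∈ Ω`,
then `μ = ν`. -/
theorem statement3 (n : ℕ) (hn : 1 < n) (q : ℝ) (hq : 0 < q)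
    (hqne : ∀ m : ℤ, q ≠ 2 * (m : ℝ))
    (μ ν : SignedMeasure (EuclideanSpace ℝ (Fin n)))
    (hμs : μ.totalVariation (sphere (0 : EuclideanSpace ℝ (Fin n)) 1)ᶜ = 0)
    (hνs : ν.totalVariation (sphere (0 : EuclideanSpace ℝ (Fin n)) 1)ᶜ = 0)
    (hμsym : ∀ A : Set (EuclideanSpace ℝ (Fin n)), MeasurableSet A → μ A = μ (Neg.neg ⁻¹' A))
    (hνsym : ∀ A : Set (EuclideanSpace ℝ (Fin n)), MeasurableSet A → ν A = ν (Neg.neg ⁻¹' A))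
    (heq : ∀ x ∈ sphere (0 : EuclideanSpace ℝ (Fin n)) 1,
      sInt μ (fun ξ => |⟪x, ξ⟫| ^ q) = sInt ν (fun ξ => |⟪x, ξ⟫| ^ q)) :
    μ = ν :=
  statement3_general hq (fun k => by exact_mod_cast hqne k) hμs hνs hμsym hνsym heq

end
end
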